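/- arXiv:2107.11766 — 2 statements merged into one kernel-verified Lean document; each statement's English description precedes it below -/
import Mathlib

section
/- Let F = K(λ) be the cyclotomic function field with modulus p(x) = x^2 + ax + b over K = F_q(x), where λ satisfies λ^{q^2-1} + (x^q + x + a)λ^{q-1} + x^2 + ax + b = 0, and set u = x + λ^{q-1}. Then λ^{q-1} = (u^2 + au + b)/(u^q + u) holds in F, and consequently F = F_q(u, λ) is a Kummer extension of degree q - 1 over F_q(u) defined by λ^{q-1} = (u^2+au+b)/(u^q+u). -/
open Polynomial

lemma aux_quad_natDegree {k : Type*} [Field k] (a b : k) :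
    (X ^ 2 + C a * X + C b : k[X]).natDegree = 2 := by
  compute_degree!

lemma aux_coprime {Fq : Type*} [Field Fq] [Fintype Fq] [CharP Fq 2] (a b : Fq)
    (hirr : Irreducible (X ^ 2 + C a * X + C b : Fq[X])) :
    IsCoprime (X ^ 2 + C a * X + C b : Fq[X]) (X ^ Fintype.card Fq + X) := by
  refine (hirr.coprime_iff_not_dvd).2 fun hd => ?_
  have h1 : (X ^ Fintype.card Fq + X : Fq[X]) = X ^ Fintype.card Fq - X := by
    rw [CharTwo.sub_eq_add]
  have hc : 1 < Fintype.card Fq := Fintype.one_lt_card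
  have hroots := FiniteField.roots_X_pow_card_sub_X Fq
  have hprod : ((X ^ Fintype.card Fq - X : Fq[X]).roots.map (fun t => X - C t)).prod
      = X ^ Fintype.card Fq - X := by
    apply prod_multiset_X_sub_C_of_monic_of_roots_card_eq
    · apply monic_X_pow_sub
      rw [degree_X]; exact_mod_cast hc
    · rw [hroots, FiniteField.X_pow_card_sub_X_natDegree_eq _ hc]; rfl
  rw [h1, ← hprod] at hd
  obtain ⟨t, -, ht⟩ := hirr.prime.exists_mem_multiset_map_dvd hd
  have := natDegree_le_of_dvd ht (X_sub_C_ne_zero t)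
  rw [aux_quad_natDegree, natDegree_X_sub_C] at this
  omega

lemma aux_irr {Fq : Type*} [Field Fq] (m : ℕ) (hm : 0 < m) (p d : Fq[X])
    (hirr : Irreducible p) (hco : IsCoprime p d) :
    Irreducible (C d * X ^ m + C (-p) : Fq[X][X]) ∧
      (C d * X ^ m + C (-p) : Fq[X][X]).natDegree = m ∧
      (C d * X ^ m + C (-p) : Fq[X][X]).IsPrimitive := by
  have hd0 : d ≠ 0 := by
    rintro rfl
    exact hirr.not_isUnit (isCoprime_zero_right.1 hco)
  have hnd : (C d * X ^ m + C (-p) : Fq[X][X]).natDegree = m := by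
    rw [natDegree_add_C, natDegree_C_mul_X_pow _ _ hd0]
  have hne : (C d * X ^ m + C (-p) : Fq[X][X]) ≠ 0 := by
    intro h
    rw [h] at hnd
    simp at hnd
    omega
  have hcm : (C d * X ^ m + C (-p) : Fq[X][X]).coeff m = d := by
    rw [coeff_add, coeff_C_mul_X_pow, coeff_C_of_ne_zero hm.ne']; simp
  have hcj : ∀ j, j ≠ 0 → j ≠ m → (C d * X ^ m + C (-p) : Fq[X][X]).coeff j = 0 := by
    intro j h0 hj
    rw [coeff_add, coeff_C_mul_X_pow, coeff_C_of_ne_zero h0]; simp [hj]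
  have hc0 : (C d * X ^ m + C (-p) : Fq[X][X]).coeff 0 = -p := by
    rw [coeff_add, coeff_C_mul_X_pow, coeff_C_zero]; simp [hm.ne]
  have hprim : (C d * X ^ m + C (-p) : Fq[X][X]).IsPrimitive := by
    intro r hr
    rw [C_dvd_iff_dvd_coeff] at hr
    have h1 := hr m
    have h2 := hr 0
    rw [hcm] at h1
    rw [hc0, dvd_neg] at h2
    exact hco.isUnit_of_dvd' h2 h1
  refine ⟨?_, hnd, hprim⟩
  have hP : (Ideal.span {p}).IsPrime := (Ideal.span_singleton_prime hirr.ne_zero).2 hirr.prime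
  refine irreducible_of_eisenstein_criterion hP ?_ ?_ ?_ ?_ hprim
  · rw [leadingCoeff, hnd, hcm, Ideal.mem_span_singleton]
    exact (hirr.coprime_iff_not_dvd).1 hco
  · intro j hj
    rw [degree_eq_natDegree hne, hnd] at hj
    have hj' : j < m := by exact_mod_cast hj
    rw [Ideal.mem_span_singleton]
    by_cases h0 : j = 0
    · rw [h0, hc0, dvd_neg]
    · rw [hcj j h0 hj'.ne]; exact dvd_zero _
  · rw [← natDegree_pos_iff_degree_pos, hnd]; exact hm
  · rw [hc0, Ideal.span_singleton_pow, Ideal.mem_span_singleton, dvd_neg]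
    intro h
    rw [pow_two] at h
    have : p * p ∣ p * 1 := by simpa using h
    exact hirr.not_isUnit (isUnit_of_dvd_one ((mul_dvd_mul_iff_left hirr.ne_zero).1 this))

lemma aux_deg {Fq F : Type*} [Field Fq] [Field F] [Algebra Fq F] (u lam : F)
    (hu : Transcendental Fq u) (m : ℕ) (hm : 0 < m) (p d : Fq[X])
    (hirr : Irreducible p) (hco : IsCoprime p d)
    (h : lam ^ m * aeval u d = aeval u p)
    (htop : IntermediateField.adjoin Fq {u, lam} = (⊤ : IntermediateField Fq F)) :
    Module.finrank (IntermediateField.adjoin Fq {u}) F = m := by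
  obtain ⟨h1, h2, h3⟩ := aux_irr m hm p d hirr hco
  set P : Fq[X][X] := C d * X ^ m + C (-p) with hPdef
  have h4 : Irreducible (P.map (algebraMap Fq[X] (RatFunc Fq))) :=
    (h3.irreducible_iff_irreducible_map_fraction_map).1 h1
  let e := RatFunc.algEquivOfTranscendental u hu
  let Q := (P.map (algebraMap Fq[X] (RatFunc Fq))).map (e.toRingEquiv : RatFunc Fq ≃+* IntermediateField.adjoin Fq {u}).toRingHom
  have h5 : Irreducible Q := by
    have := (MulEquiv.irreducible_iff (Polynomial.mapEquiv e.toRingEquiv)).2 h4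
    simpa [Q] using this
  have hdeg : Q.natDegree = m := by
    have hi : Function.Injective (algebraMap Fq[X] (RatFunc Fq)) := IsFractionRing.injective _ _
    rw [natDegree_map, natDegree_map_eq_of_injective hi, h2]
  have hroot : aeval lam Q = 0 := by
    have hev : ∀ g : Fq[X], algebraMap (IntermediateField.adjoin Fq {u}) F
        (e (algebraMap Fq[X] (RatFunc Fq) g)) = aeval u g := by
      intro g
      simp only [e]
      rw [RatFunc.algEquivOfTranscendental_algebraMap, ← aeval_algebraMap_apply,
        IntermediateField.AdjoinSimple.algebraMap_gen]
    have : aeval lam Q = aeval u d * lam ^ m + - aeval u p := by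
      simp only [Q, P, Polynomial.map_add, Polynomial.map_mul, Polynomial.map_pow, map_X, map_C,
        map_add, map_mul, map_pow, aeval_X, aeval_C]
      rw [← map_neg, ← hev d, ← hev (-p)]
      rfl
    rw [this, ← h]; ring
  have hQ := minpoly.eq_of_irreducible h5 hroot
  have hint : IsIntegral (IntermediateField.adjoin Fq {u}) lam :=
    IsAlgebraic.isIntegral ⟨Q, h5.ne_zero, hroot⟩
  have htop' : IntermediateField.adjoin (IntermediateField.adjoin Fq {u}) {lam} = ⊤ := by
    rw [← IntermediateField.restrictScalars_eq_top_iff (K := Fq),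
      IntermediateField.adjoin_simple_adjoin_simple, htop]
  rw [← IntermediateField.finrank_top', ← htop', IntermediateField.adjoin.finrank hint, ← hQ,
    natDegree_mul_C, hdeg]
  exact inv_ne_zero (leadingCoeff_ne_zero.2 h5.ne_zero)

/-- Section 4.1. Let `F = K(λ)` be the cyclotomic function field with modulus
`p(x) = x^2 + ax + b` (a primitive irreducible quadratic) over `K = F_q(x)`, `q = 2^n`,
where `λ` satisfies `λ^{q²-1} + (x^q + x + a)λ^{q-1} + (x² + ax + b) = 0`, and set
`u = x + λ^{q-1}`. Then `λ^{q-1}·(u^q + u) = u² + au + b`, i.e.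
`λ^{q-1} = (u² + au + b)/(u^q + u)`, and consequently `F = F_q(u, λ)` is a Kummer
extension of degree `q - 1` over `F_q(u)`. -/
theorem stmt_16 (n q : ℕ) (hn : 0 < n) (hq : q = 2 ^ n) {Fq : Type*} [Field Fq]
    [Fintype Fq] (hcard : Fintype.card Fq = q) (a b : Fq)
    (hirr : Irreducible (X ^ 2 + C a * X + C b))
    (hprim : IsLeast {e : ℕ | 0 < e ∧ (X ^ 2 + C a * X + C b) ∣ X ^ e - 1} (q ^ 2 - 1))
    {F : Type*} [Field F] [Algebra Fq F] [Algebra (RatFunc Fq) F]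
    [IsScalarTower Fq (RatFunc Fq) F]
    (lam : F) (x : F) (hx : x = algebraMap (RatFunc Fq) F RatFunc.X)
    (heq : lam ^ (q ^ 2 - 1) + (x ^ q + x + algebraMap Fq F a) * lam ^ (q - 1) +
      (x ^ 2 + algebraMap Fq F a * x + algebraMap Fq F b) = 0)
    (hgen : IntermediateField.adjoin (RatFunc Fq) {lam} = ⊤)
    (hdeg : Module.finrank (RatFunc Fq) F = q ^ 2 - 1)
    (u : F) (hu : u = x + lam ^ (q - 1)) :
    lam ^ (q - 1) * (u ^ q + u) =
        u ^ 2 + algebraMap Fq F a * u + algebraMap Fq F b ∧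
    u ^ q + u ≠ 0 ∧
    lam ^ (q - 1) =
      (u ^ 2 + algebraMap Fq F a * u + algebraMap Fq F b) / (u ^ q + u) ∧
    IntermediateField.adjoin Fq {u, lam} = (⊤ : IntermediateField Fq F) ∧
    Module.finrank (IntermediateField.adjoin Fq {u}) F = q - 1 := by
  have hcharq : CharP Fq 2 := by
    have : Nat.card Fq = 2 ^ n := by rw [Nat.card_eq_fintype_card, hcard, hq]
    haveI : Fact (Nat.Prime 2) := ⟨Nat.prime_two⟩
    exact charP_of_card_eq_prime_pow (by rw [hcard, hq])
  haveI hcharF : CharP F 2 := charP_of_injective_algebraMap (algebraMap Fq F).injective 2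
  have hq2 : 2 ≤ q := by
    rw [hq]; calc 2 = 2 ^ 1 := rfl
      _ ≤ 2 ^ n := Nat.pow_le_pow_right (by norm_num) hn
  have hco := aux_coprime a b hirr
  rw [hcard] at hco
  have hpu : aeval u (X ^ 2 + C a * X + C b : Fq[X]) =
      u ^ 2 + algebraMap Fq F a * u + algebraMap Fq F b := by simp
  have hdu : aeval u (X ^ q + X : Fq[X]) = u ^ q + u := by simp
  have h1 : lam ^ (q - 1) * (u ^ q + u) =
        u ^ 2 + algebraMap Fq F a * u + algebraMap Fq F b := by
    have hexp : lam ^ (q ^ 2 - 1) = (lam ^ (q - 1)) ^ q * lam ^ (q - 1) := by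
      rw [← pow_succ, ← pow_mul]
      congr 1
      obtain ⟨r, rfl⟩ : ∃ r, q = r + 1 := ⟨q - 1, by omega⟩
      simp only [Nat.add_sub_cancel]
      rw [Nat.sub_eq_iff_eq_add (Nat.one_le_pow _ _ (by omega))]
      ring
    rw [hexp] at heq
    have huq : u ^ q = x ^ q + (lam ^ (q - 1)) ^ q := by
      rw [hu, hq]; exact add_pow_char_pow _ _ _ _
    rw [huq]
    generalize (lam ^ (q - 1)) ^ q = w at *
    generalize x ^ q = v at *
    generalize lam ^ (q - 1) = y at *
    subst hu
    have h2 : (2 : F) = 0 := CharTwo.two_eq_zero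
    linear_combination heq - (x ^ 2 + x * y + algebraMap Fq F a * x + algebraMap Fq F b + algebraMap Fq F a * y) * h2
  have h2 : u ^ q + u ≠ 0 := by
    intro h0
    rw [h0, mul_zero] at h1
    obtain ⟨r, s, hrs⟩ := hco
    have := congrArg (aeval u) hrs
    rw [map_add, map_mul, map_mul, hpu, hdu, ← h1, h0] at this
    simp at this
  have hxu : x = u - lam ^ (q - 1) := by rw [hu]; ring
  have h3 : IntermediateField.adjoin Fq {u, lam} = (⊤ : IntermediateField Fq F) := by
    set E := IntermediateField.adjoin Fq {u, lam} with hE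
    have hul : u ∈ E := IntermediateField.subset_adjoin _ _ (by simp)
    have hll : lam ∈ E := IntermediateField.subset_adjoin _ _ (by simp)
    have hxE : x ∈ E := by rw [hxu]; exact sub_mem hul (pow_mem hll _)
    have hpE : ∀ g : Fq[X], algebraMap (RatFunc Fq) F (algebraMap Fq[X] (RatFunc Fq) g) ∈ E := by
      intro g
      rw [← RatFunc.aeval_X_left_eq_algebraMap, ← aeval_algebraMap_apply, ← hx]
      have hh : ((aeval (⟨x, hxE⟩ : E) g : E) : F) = aeval x g :=
        (aeval_algHom_apply E.val (⟨x, hxE⟩ : E) g).symm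
      rw [← hh]; exact SetLike.coe_mem _
    have hKE : ∀ r : RatFunc Fq, algebraMap (RatFunc Fq) F r ∈ E := by
      intro r
      rw [← RatFunc.num_div_denom r, map_div₀]
      exact div_mem (hpE _) (hpE _)
    rw [eq_top_iff]
    intro z _
    have hz : z ∈ IntermediateField.adjoin (RatFunc Fq) {lam} := by rw [hgen]; trivial
    induction hz using IntermediateField.adjoin_induction with
    | mem y hy => rw [Set.mem_singleton_iff.1 hy]; exact hll
    | algebraMap r => exact hKE r
    | add y z _ _ hy hz => exact add_mem (hy trivial) (hz trivial)
    | inv y _ hy => exact inv_mem (hy trivial)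
    | mul y z _ _ hy hz => exact mul_mem (hy trivial) (hz trivial)
  have h4 : lam ^ (q - 1) =
      (u ^ 2 + algebraMap Fq F a * u + algebraMap Fq F b) / (u ^ q + u) := by
    rw [eq_div_iff h2, h1]
  have hxt : Transcendental Fq x := by
    rw [hx, transcendental_algebraMap_iff (algebraMap (RatFunc Fq) F).injective]
    exact RatFunc.transcendental_X
  have hut : Transcendental Fq u := by
    intro hua
    apply hxt
    rw [hxu, h4, ← hpu, ← hdu]
    have hg : ∀ g : Fq[X], IsAlgebraic Fq (aeval u g) := fun g =>
      (IsIntegral.of_mem_of_fg _ hua.isIntegral.fg_adjoin_singleton _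
        (aeval_mem_adjoin_singleton _ _)).isAlgebraic
    rw [div_eq_mul_inv]
    exact hua.sub ((hg _).mul (hg _).inv)
  refine ⟨h1, h2, h4, h3, ?_⟩
  exact aux_deg u lam hut (q - 1) (by omega) _ _ hirr hco (by rw [hpu, hdu, h1]) h3
end

section
/- Let q = 2^n with n ≥ 1. Then there exists a family S of q - 1 binary (±1-valued) sequences of length q + 1 whose maximum correlation (maximum over all nontrivial autocorrelations at delays 1 ≤ t ≤ q and all cross-correlations between distinct sequences at delays 0 ≤ t ≤ q, all indices mod q+1) is at most ⌊2√q⌋ - δ_q, where δ_q = 0 if ⌊2√q⌋ is odd and δ_q = 1 otherwise. -/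
open Polynomial in
/-- height of a rational function -/
noncomputable def hh {L : Type} [Field L] (x : RatFunc L) : ℕ := max x.num.natDegree x.denom.natDegree

open Polynomial in
lemma hh_eq {L : Type} [Field L] {f g : L[X]} (hg : g ≠ 0) (hc : IsCoprime f g) :
    hh (algebraMap L[X] (RatFunc L) f / algebraMap L[X] (RatFunc L) g)
      = max f.natDegree g.natDegree := by
  set x := algebraMap L[X] (RatFunc L) f / algebraMap L[X] (RatFunc L) g with hx
  have h1 : x.num * g = f * x.denom := (RatFunc.num_mul_eq_mul_denom_iff hg).2 hx
  have h2 := RatFunc.isCoprime_num_denom x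
  have a1 : x.num ∣ f := h2.dvd_of_dvd_mul_right (Dvd.intro _ h1)
  have a2 : f ∣ x.num := hc.dvd_of_dvd_mul_right (Dvd.intro _ h1.symm)
  have a3 : x.denom ∣ g := h2.symm.dvd_of_dvd_mul_left (Dvd.intro_left _ h1.symm)
  have a4 : g ∣ x.denom := hc.symm.dvd_of_dvd_mul_left (Dvd.intro_left _ h1)
  have e1 := natDegree_eq_of_degree_eq (degree_eq_degree_of_associated (associated_of_dvd_dvd a1 a2))
  have e2 := natDegree_eq_of_degree_eq (degree_eq_degree_of_associated (associated_of_dvd_dvd a3 a4))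
  rw [hh, e1, e2]

open Polynomial in
lemma pair_dvd {L : Type} [Field L] {f1 g1 f2 g2 D S P : L[X]}
    (c1 : IsCoprime f1 g1) (c2 : IsCoprime f2 g2) (hg1 : g1 ≠ 0)
    (h1 : g1 * g2 * S = D * (f1 * g2 + f2 * g1)) (h2 : g1 * g2 * P = D * (f1 * f2)) :
    g1 * g2 ∣ D := by
  have k1 : g1 ∣ D * g2 := c1.symm.dvd_of_dvd_mul_left (z := D * g2)
    ⟨g2 * S - D * f2, by linear_combination -h1⟩
  have k2 : g1 ∣ D * f2 := c1.symm.dvd_of_dvd_mul_left (z := D * f2)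
    ⟨g2 * P, by linear_combination -h2⟩
  have k3 : g1 ∣ D := by
    obtain ⟨a2, b2, e2⟩ := c2
    have := dvd_add (Dvd.dvd.mul_left k2 a2) (Dvd.dvd.mul_left k1 b2)
    have e : a2 * (D * f2) + b2 * (D * g2) = D := by linear_combination D * e2
    rwa [e] at this
  obtain ⟨D1, rfl⟩ := k3
  have h1' : g2 * S = D1 * (f1 * g2 + f2 * g1) := by
    apply mul_left_cancel₀ hg1; linear_combination h1
  have h2' : g2 * P = D1 * (f1 * f2) := by
    apply mul_left_cancel₀ hg1; linear_combination h2
  apply mul_dvd_mul_left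
  have m1 : g2 ∣ D1 * g1 := c2.symm.dvd_of_dvd_mul_left (z := D1 * g1)
    ⟨S - D1 * f1, by linear_combination -h1'⟩
  have m2 : g2 ∣ D1 * f1 := c2.symm.dvd_of_dvd_mul_left (z := D1 * f1)
    ⟨P, by linear_combination -h2'⟩
  obtain ⟨a2, b2, e2⟩ := c1
  have := dvd_add (Dvd.dvd.mul_left m2 a2) (Dvd.dvd.mul_left m1 b2)
  have e : a2 * (D1 * f1) + b2 * (D1 * g1) = D1 := by linear_combination D1 * e2
  rwa [e] at this

open Polynomial in
lemma pair_deg {L : Type} [Field L] {f1 g1 f2 g2 : L[X]} {M : ℕ} (hg1 : g1 ≠ 0) (hg2 : g2 ≠ 0)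
    (h1 : (g1 * g2).natDegree ≤ M) (h2 : (f1 * g2 + f2 * g1).natDegree ≤ M)
    (h3 : (f1 * f2).natDegree ≤ M) :
    max f1.natDegree g1.natDegree + max f2.natDegree g2.natDegree ≤ M := by
  rw [natDegree_mul hg1 hg2] at h1
  by_cases z1 : f1 = 0
  · subst z1
    by_cases z2 : f2 = 0
    · subst z2; simpa using h1
    · simp only [zero_mul, zero_add] at h2
      rw [natDegree_mul z2 hg1] at h2
      simp only [natDegree_zero]
      omega
  by_cases z2 : f2 = 0
  · subst z2
    simp only [zero_mul, add_zero] at h2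
    rw [natDegree_mul z1 hg2] at h2
    simp only [natDegree_zero]
    omega
  rw [natDegree_mul z1 z2] at h3
  have n1 := natDegree_mul z1 hg2
  have n2 := natDegree_mul z2 hg1
  rcases lt_trichotomy (f1 * g2).natDegree (f2 * g1).natDegree with h | h | h
  · rw [natDegree_add_eq_right_of_natDegree_lt h] at h2
    omega
  · omega
  · rw [natDegree_add_eq_left_of_natDegree_lt h] at h2
    omega

open Polynomial in
lemma hh_pair {L : Type} [Field L] {x1 x2 : RatFunc L} {D S P : L[X]} {M : ℕ} (hD : D ≠ 0)
    (h1 : (x1 + x2) * algebraMap L[X] (RatFunc L) D = algebraMap L[X] (RatFunc L) S)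
    (h2 : (x1 * x2) * algebraMap L[X] (RatFunc L) D = algebraMap L[X] (RatFunc L) P)
    (d1 : D.natDegree ≤ M) (d2 : S.natDegree ≤ M) (d3 : P.natDegree ≤ M) :
    hh x1 + hh x2 ≤ M := by
  have hg1 := RatFunc.denom_ne_zero x1
  have hg2 := RatFunc.denom_ne_zero x2
  have inj := IsFractionRing.injective L[X] (RatFunc L)
  have hg1' : algebraMap L[X] (RatFunc L) x1.denom ≠ 0 := by simpa using hg1
  have hg2' : algebraMap L[X] (RatFunc L) x2.denom ≠ 0 := by simpa using hg2
  have e1 : x1 * algebraMap L[X] (RatFunc L) x1.denom = algebraMap L[X] (RatFunc L) x1.num := by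
    conv_lhs => rw [← RatFunc.num_div_denom x1]
    rw [RatFunc.num_div_denom x1]
    have := RatFunc.num_div_denom x1
    rw [div_eq_iff hg1'] at this
    exact this.symm
  have e2 : x2 * algebraMap L[X] (RatFunc L) x2.denom = algebraMap L[X] (RatFunc L) x2.num := by
    have := RatFunc.num_div_denom x2
    rw [div_eq_iff hg2'] at this
    exact this.symm
  have k1 : x1.denom * x2.denom * S = D * (x1.num * x2.denom + x2.num * x1.denom) := by
    apply inj
    simp only [map_mul, map_add]
    rw [← h1, ← e1, ← e2]; ring
  have k2 : x1.denom * x2.denom * P = D * (x1.num * x2.num) := by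
    apply inj
    simp only [map_mul]
    rw [← h2, ← e1, ← e2]; ring
  obtain ⟨k, rfl⟩ := pair_dvd (RatFunc.isCoprime_num_denom x1) (RatFunc.isCoprime_num_denom x2)
    hg1 k1 k2
  have hk : k ≠ 0 := right_ne_zero_of_mul hD
  have hgg : x1.denom * x2.denom ≠ 0 := mul_ne_zero hg1 hg2
  have l1 : S = (x1.num * x2.denom + x2.num * x1.denom) * k := by
    apply mul_left_cancel₀ hgg; linear_combination k1
  have l2 : P = (x1.num * x2.num) * k := by
    apply mul_left_cancel₀ hgg; linear_combination k2
  have key : ∀ u : L[X], (u * k).natDegree ≤ M → u.natDegree ≤ M := by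
    intro u hu
    by_cases h : u = 0
    · simp [h]
    · rw [natDegree_mul h hk] at hu; omega
  exact pair_deg hg1 hg2 (key _ d1) (key _ (l1 ▸ d2)) (key _ (l2 ▸ d3))


/-- the twisted curve -/
noncomputable def EW {L : Type} [Field L] (a : L) (θ : RatFunc L) : WeierstrassCurve.Affine (RatFunc L) :=
  ⟨1, θ, 0, 0, algebraMap (Polynomial L) (RatFunc L) (Polynomial.C a)⟩

/-- height of points -/
noncomputable def ht {L : Type} [Field L] {a : L} {θ : RatFunc L} : (EW a θ).Point → ℕ
  | .zero => 0
  | .some x _ _ => hh x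

section
open Polynomial Classical
variable {L : Type} [Field L] [CharP L 2] {a : L} {θ : RatFunc L}

lemma two_eq : (2 : RatFunc L) = 0 := by
  have : (2 : L) = 0 := CharTwo.two_eq_zero
  have h := congrArg (fun z => algebraMap L (RatFunc L) z) this
  simp only [map_ofNat, map_zero] at h
  exact h

lemma EW_nonsing (ha : a ≠ 0) {x y : RatFunc L} (h : (EW a θ).Equation x y) :
    (EW a θ).Nonsingular x y := by
  apply ((EW a θ).equation_iff_nonsingular_of_Δ_ne_zero ?_).1 h
  have h2 := two_eq (L := L)
  have : (EW a θ).Δ = algebraMap (Polynomial L) (RatFunc L) (Polynomial.C a) := by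
    simp only [WeierstrassCurve.Δ, WeierstrassCurve.b₂, WeierstrassCurve.b₄, WeierstrassCurve.b₆, WeierstrassCurve.b₈, EW]
    grind
  rw [this]
  simpa using ha

lemma EW_eq {x y : RatFunc L} : (EW a θ).Equation x y ↔
    y ^ 2 + x * y = x ^ 3 + θ * x ^ 2 + algebraMap (Polynomial L) (RatFunc L) (Polynomial.C a) := by
  rw [WeierstrassCurve.Affine.equation_iff]
  simp [EW]

lemma EW_negY (x y : RatFunc L) : (EW a θ).negY x y = y + x := by
  have h2 := two_eq (L := L)
  simp only [WeierstrassCurve.Affine.negY, EW]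
  grind

lemma ht_zero : ht (0 : (EW a θ).Point) = 0 := rfl

lemma ht_neg (P : (EW a θ).Point) : ht (-P) = ht P := by
  rcases P with _ | ⟨x, y, h⟩ <;> rfl

lemma ht_add_of_ne {x1 y1 x2 y2 : RatFunc L} (h1 : (EW a θ).Nonsingular x1 y1)
    (h2 : (EW a θ).Nonsingular x2 y2) (hx : x1 ≠ x2) :
    ht (WeierstrassCurve.Affine.Point.some x1 y1 h1 + WeierstrassCurve.Affine.Point.some x2 y2 h2) =
    hh (((y1 + y2) / (x1 + x2)) ^ 2 + (y1 + y2) / (x1 + x2) + θ + x1 + x2) := by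
  rw [WeierstrassCurve.Affine.Point.add_of_X_ne hx]
  have h2 := two_eq (L := L)
  simp only [ht, WeierstrassCurve.Affine.addX, WeierstrassCurve.Affine.slope_of_X_ne hx, EW]
  have e1 : x1 - x2 = x1 + x2 := by grind
  have e2 : y1 - y2 = y1 + y2 := by grind
  rw [e1, e2]
  congr 1
  grind

lemma hh_dbl (ha : a ≠ 0) (x : RatFunc L) (hx : x ≠ 0) :
    hh (x ^ 2 + algebraMap (Polynomial L) (RatFunc L) (Polynomial.C a) / x ^ 2) = 4 * hh x := by
  set f := x.num with hf
  set g := x.denom with hg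
  have hg0 : g ≠ 0 := x.denom_ne_zero
  have hf0 : f ≠ 0 := RatFunc.num_ne_zero hx
  have hc : IsCoprime f g := x.isCoprime_num_denom
  have e : x ^ 2 + algebraMap (Polynomial L) (RatFunc L) (Polynomial.C a) / x ^ 2 =
    algebraMap (Polynomial L) (RatFunc L) (f ^ 4 + Polynomial.C a * g ^ 4) / 
    algebraMap (Polynomial L) (RatFunc L) (f ^ 2 * g ^ 2) := by
    rw [← RatFunc.num_div_denom x, ← hf, ← hg]
    have hg' : algebraMap L[X] (RatFunc L) g ≠ 0 := by simpa using hg0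
    have hf' : algebraMap L[X] (RatFunc L) f ≠ 0 := by simpa using hf0
    simp only [map_add, map_mul, map_pow]
    field_simp
  have hCa : (Polynomial.C a : L[X]) ≠ 0 := by simpa using ha
  have hu : IsUnit (Polynomial.C a : L[X]) := by simpa using ha
  have c1 : IsCoprime (f ^ 4 + Polynomial.C a * g ^ 4) f := by
    have : IsCoprime (Polynomial.C a * g ^ 4) f := by
      rw [isCoprime_mul_unit_left_left hu]; exact hc.symm.pow_left
    have := IsCoprime.add_mul_left_left this (f ^ 3)
    have e : f ^ 4 + Polynomial.C a * g ^ 4 = Polynomial.C a * g ^ 4 + f * f ^ 3 := by ring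
    rwa [e]
  have c2 : IsCoprime (f ^ 4 + Polynomial.C a * g ^ 4) g := by
    have : IsCoprime (f ^ 4) g := hc.pow_left
    have := IsCoprime.add_mul_left_left this (Polynomial.C a * g ^ 3)
    have e : f ^ 4 + Polynomial.C a * g ^ 4 = f ^ 4 + g * (Polynomial.C a * g ^ 3) := by ring
    rwa [e]
  rw [e, hh_eq (by positivity) (IsCoprime.mul_right c1.pow_right c2.pow_right)]
  have n1 : (f ^ 4).natDegree = 4 * f.natDegree := by simp
  have n2 : (Polynomial.C a * g ^ 4).natDegree = 4 * g.natDegree := by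
    rw [natDegree_C_mul ha]; simp
  have n3 : (f ^ 2 * g ^ 2).natDegree = 2 * f.natDegree + 2 * g.natDegree := by
    rw [natDegree_mul (by positivity) (by positivity)]; simp
  have n4 := natDegree_add_le (f ^ 4) (Polynomial.C a * g ^ 4)
  rw [hh, ← hf, ← hg]
  rcases lt_trichotomy f.natDegree g.natDegree with h | h | h
  · rw [natDegree_add_eq_right_of_natDegree_lt (by omega)]; omega
  · omega
  · rw [natDegree_add_eq_left_of_natDegree_lt (by omega)]; omega

lemma ht_dbl (ha : a ≠ 0) (P : (EW a θ).Point) : ht (P + P) = 4 * ht P := by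
  have h2 := two_eq (L := L)
  rcases P with _ | ⟨x, y, h⟩
  · change ht ((0 : (EW a θ).Point) + 0) = 4 * 0
    rw [add_zero]; rfl
  by_cases hx : x = 0
  · subst hx
    rw [WeierstrassCurve.Affine.Point.add_self_of_Y_eq (by rw [EW_negY]; simp)]
    simp [ht, hh]
  · have hy : y ≠ (EW a θ).negY x y := by
      rw [EW_negY]; intro h; apply hx; grind
    rw [WeierstrassCurve.Affine.Point.add_self_of_Y_ne hy]
    have he := EW_eq.1 h.1
    have e := hh_dbl ha x hx
    simp only [ht]
    rw [← e]
    congr 1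
    rw [WeierstrassCurve.Affine.slope_of_Y_ne rfl hy, EW_negY]
    simp only [WeierstrassCurve.Affine.addX, EW]
    have e1 : y - (y + x) = x := by grind
    rw [e1]
    field_simp
    grind

lemma ht_par_le (ha : a ≠ 0) (P Q : (EW a θ).Point) : ht (P + Q) + ht (P - Q) ≤ 2 * ht P + 2 * ht Q := by
  have h2 := two_eq (L := L)
  by_cases hP : P = 0
  · subst hP; rw [zero_add, zero_sub, ht_neg, ht_zero]; omega
  by_cases hQ : Q = 0
  · subst hQ; rw [add_zero, sub_zero, ht_zero]; omega
  by_cases e1 : P = Q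
  · subst e1; rw [sub_self, ht_dbl ha, ht_zero]; omega
  by_cases e2 : P = -Q
  · subst e2; rw [neg_add_cancel, sub_eq_add_neg, ht_dbl ha, ht_zero, ht_neg]; omega
  rw [sub_eq_add_neg]
  rcases P with _ | ⟨x1, y1, h1⟩
  · exact absurd rfl hP
  rcases Q with _ | ⟨x2, y2, h2'⟩
  · exact absurd rfl hQ
  have hx : x1 ≠ x2 := fun h => by
    rcases WeierstrassCurve.Affine.Point.X_eq_iff.1 h with h | h
    · exact e1 h
    · exact e2 h
  rw [WeierstrassCurve.Affine.Point.neg_some, ht_add_of_ne _ _ hx, ht_add_of_ne _ _ hx, EW_negY]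
  simp only [ht]
  set f1 := x1.num with hf1
  set g1 := x1.denom with hg1
  set f2 := x2.num with hf2
  set g2 := x2.denom with hg2
  have hg10 : g1 ≠ 0 := x1.denom_ne_zero
  have hg20 : g2 ≠ 0 := x2.denom_ne_zero
  have hg1' : algebraMap L[X] (RatFunc L) g1 ≠ 0 := by simpa using hg10
  have hg2' : algebraMap L[X] (RatFunc L) g2 ≠ 0 := by simpa using hg20
  have X1 : algebraMap L[X] (RatFunc L) f1 = x1 * algebraMap L[X] (RatFunc L) g1 := by
    rw [← div_eq_iff hg1']; exact x1.num_div_denom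
  have X2 : algebraMap L[X] (RatFunc L) f2 = x2 * algebraMap L[X] (RatFunc L) g2 := by
    rw [← div_eq_iff hg2']; exact x2.num_div_denom
  have E1 := EW_eq.1 h1.1
  have E2 := EW_eq.1 h2'.1
  have hs : x1 + x2 ≠ 0 := by intro h; apply hx; grind
  have hD' : algebraMap L[X] (RatFunc L) ((f1 * g2 + f2 * g1) ^ 2) = 
    (x1 + x2) ^ 2 * algebraMap L[X] (RatFunc L) g1 ^ 2 * algebraMap L[X] (RatFunc L) g2 ^ 2 := by
    simp only [map_pow, map_add, map_mul, X1, X2]; ring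
  have hD : (f1 * g2 + f2 * g1) ^ 2 ≠ 0 := by
    intro h
    rw [h, map_zero] at hD'
    exact absurd hD'.symm (by positivity)
  have b1 : f1.natDegree ≤ hh x1 := le_max_left _ _
  have b2 : g1.natDegree ≤ hh x1 := le_max_right _ _
  have b3 : f2.natDegree ≤ hh x2 := le_max_left _ _
  have b4 : g2.natDegree ≤ hh x2 := le_max_right _ _
  have m : ∀ u v : L[X], (u * v).natDegree ≤ u.natDegree + v.natDegree := fun u v => natDegree_mul_le
  refine hh_pair (D := (f1 * g2 + f2 * g1) ^ 2) (S := (f1 * g2) * (f2 * g1))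
    (P := (f1 * f2) ^ 2 + Polynomial.C a * (g1 * g2) ^ 2) hD ?_ ?_ ?_ ?_ ?_
  · rw [hD']
    simp only [map_mul, X1, X2]
    field_simp
    grind
  · rw [hD']
    simp only [map_mul, map_add, map_pow, X1, X2]
    have N1 : (((y1 + y2) / (x1 + x2)) ^ 2 + (y1 + y2) / (x1 + x2) + θ + x1 + x2) * (x1 + x2) ^ 2 =
        x1 * y2 + x2 * y1 + x1 * x2 * (x1 + x2) := by
      field_simp
      grind
    have N2 : (((y1 + (y2 + x2)) / (x1 + x2)) ^ 2 + (y1 + (y2 + x2)) / (x1 + x2) + θ + x1 + x2) * (x1 + x2) ^ 2 =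
        x1 * y2 + x2 * y1 + x1 * x2 * (x1 + x2) + x1 * x2 := by
      field_simp
      grind
    have N3 : (x1 * y2 + x2 * y1 + x1 * x2 * (x1 + x2)) *
        (x1 * y2 + x2 * y1 + x1 * x2 * (x1 + x2) + x1 * x2) = (x1 + x2) ^ 2 *
        (x1 ^ 2 * x2 ^ 2 + algebraMap (Polynomial L) (RatFunc L) (Polynomial.C a)) := by
      grind
    rw [← N1] at N3
    rw [N1, ← N2, ← N1] at N3
    generalize (((y1 + y2) / (x1 + x2)) ^ 2 + (y1 + y2) / (x1 + x2) + θ + x1 + x2) = u at *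
    generalize (((y1 + (y2 + x2)) / (x1 + x2)) ^ 2 + (y1 + (y2 + x2)) / (x1 + x2) + θ + x1 + x2) = v at *
    have hs2 : (x1 + x2) ^ 2 ≠ 0 := pow_ne_zero _ hs
    apply mul_left_cancel₀ hs2
    linear_combination (algebraMap L[X] (RatFunc L) g1) ^ 2 * (algebraMap L[X] (RatFunc L) g2) ^ 2 * N3
  · have := natDegree_add_le (f1 * g2) (f2 * g1)
    have := m f1 g2
    have := m f2 g1
    have := natDegree_pow_le (p := f1 * g2 + f2 * g1) (n := 2)
    omega
  · have := m f1 g2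
    have := m f2 g1
    have := m (f1 * g2) (f2 * g1)
    omega
  · have := natDegree_add_le ((f1 * f2) ^ 2) (Polynomial.C a * (g1 * g2) ^ 2)
    have := m f1 f2
    have := m g1 g2
    have := natDegree_pow_le (p := f1 * f2) (n := 2)
    have := natDegree_pow_le (p := g1 * g2) (n := 2)
    have := natDegree_C_mul_le a ((g1 * g2) ^ 2)
    omega

lemma ht_par (ha : a ≠ 0) (P Q : (EW a θ).Point) : ht (P + Q) + ht (P - Q) = 2 * ht P + 2 * ht Q := by
  apply le_antisymm (ht_par_le ha P Q)
  have h := ht_par_le ha (P + Q) (P - Q)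
  have e1 : P + Q + (P - Q) = P + P := by abel
  have e2 : P + Q - (P - Q) = Q + Q := by abel
  rw [e1, e2, ht_dbl ha, ht_dbl ha] at h
  omega

lemma ht_cs (ha : a ≠ 0) (P Q : (EW a θ).Point) (hQ : ht Q = 1) :
    ((ht (P + Q) : ℤ) - ht P - 1) ^ 2 ≤ 4 * ht P := by
  have par := ht_par ha (θ := θ)
  have h1 : ∀ R : (EW a θ).Point, ∀ m : ℕ, (ht (R + (m : ℤ) • Q) : ℤ) = ht R + m * ((ht (R + Q) : ℤ) - ht R - 1) + m ^ 2
     ∧ (ht (R + ((m + 1 : ℕ) : ℤ) • Q) : ℤ) = ht R + (m + 1) * ((ht (R + Q) : ℤ) - ht R - 1) + (m + 1) ^ 2 := by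
    intro R m
    induction m with
    | zero => simp; ring
    | succ m ih =>
      refine ⟨by rw [ih.2]; push_cast; ring, ?_⟩
      have := par (R + ((m + 1 : ℕ) : ℤ) • Q) Q
      have e1 : R + ((m + 1 : ℕ) : ℤ) • Q + Q = R + ((m + 1 + 1 : ℕ) : ℤ) • Q := by
        push_cast; module
      have e2 : R + ((m + 1 : ℕ) : ℤ) • Q - Q = R + (m : ℤ) • Q := by
        push_cast; module
      rw [e1, e2] at this
      push_cast at this ih ⊢
      zify at this
      rw [hQ] at this
      push_cast at this
      linarith [ih.1, ih.2]
  have h2 : ∀ R : (EW a θ).Point, ∀ m : ℤ, 0 ≤ (ht R : ℤ) + m * ((ht (R + Q) : ℤ) - ht R - 1) + m ^ 2 := by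
    intro R m
    rcases Int.eq_nat_or_neg m with ⟨k, rfl | rfl⟩
    · rw [← (h1 R k).1]; positivity
    · have h3 := (h1 (-R) k).1
      rw [ht_neg] at h3
      have h4 := par R Q
      have e : -R + Q = -(R - Q) := by abel
      rw [e, ht_neg] at h3
      have h5 : (0 : ℤ) ≤ ht (-R + (k : ℤ) • Q) := by positivity
      rw [h3] at h5
      zify at h4
      rw [hQ] at h4
      push_cast at h4
      have : (ht (R - Q) : ℤ) = 2 * ht R + 2 - ht (R + Q) := by linarith
      rw [this] at h5
      linarith
  have h3 := h2 (P + P) (-((ht (P + Q) : ℤ) - ht P - 1))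
  have h4 := par (P + Q) P
  have e1 : P + Q + P = P + P + Q := by abel
  have e2 : P + Q - P = Q := by abel
  rw [e1, e2] at h4
  zify at h4
  rw [hQ] at h4
  rw [ht_dbl ha] at h3
  push_cast at h3 h4
  have : (ht (P + P + Q) : ℤ) = 2 * ht (P + Q) + 2 * ht P - 1 := by linarith
  rw [this] at h3
  nlinarith
end


/-- partial trace -/
def TT {R : Type} [CommRing R] (n : ℕ) (z : R) : R := ∑ i ∈ Finset.range n, z ^ (2 ^ i)

lemma TT_sq {R : Type} [CommRing R] (h2 : (2 : R) = 0) (n : ℕ) (z : R) :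
    TT n z ^ 2 + TT n z = z ^ (2 ^ n) + z := by
  induction n with
  | zero => simp only [TT, Finset.range_zero, Finset.sum_empty, pow_zero, pow_one]; linear_combination -z * h2
  | succ n ih =>
    have e : TT (n + 1) z = TT n z + z ^ (2 ^ n) := by simp [TT, Finset.sum_range_succ]
    rw [e]
    have e2 : z ^ (2 ^ (n + 1)) = (z ^ (2 ^ n)) ^ 2 := by rw [← pow_mul, pow_succ]
    rw [e2]
    generalize z ^ (2 ^ n) = w at *
    linear_combination ih + (TT n z * w + w) * h2

section
open Polynomial Classical
variable {L : Type} [Field L] [CharP L 2]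

lemma two_eqL : (2 : L) = 0 := CharTwo.two_eq_zero

/-- numerator polynomial -/
noncomputable def NN (n : ℕ) (a : L) : L[X] :=
  (∑ i ∈ Finset.range n, (X ^ (2 ^ i + 2 ^ n) + C (a ^ (2 ^ i)) * X ^ (2 ^ n - 2 ^ (i + 1))))
    + X ^ (2 * 2 ^ n) + X ^ (2 ^ n + 1)

lemma pow_le_aux {n i : ℕ} (hi : i ∈ Finset.range n) : 2 ^ (i + 1) ≤ 2 ^ n := by
  rw [Finset.mem_range] at hi
  exact Nat.pow_le_pow_right (by norm_num) hi

lemma NN_deg_aux (n : ℕ) (hn : 0 < n) (a : L) :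
  ((∑ i ∈ Finset.range n, (X ^ (2 ^ i + 2 ^ n) + C (a ^ (2 ^ i)) * X ^ (2 ^ n - 2 ^ (i + 1)))) + X ^ (2 ^ n + 1) : L[X]).degree < ((2 * 2 ^ n : ℕ) : WithBot ℕ) := by
  have hq : 2 ≤ 2 ^ n := Nat.pow_le_pow_right (n := 2) (by norm_num) hn
  refine lt_of_le_of_lt (degree_add_le _ _) (max_lt ?_ ?_)
  · refine (Finset.sum_induction _ (fun p : L[X] => p.degree < ((2 * 2 ^ n : ℕ) : WithBot ℕ)) ?_ ?_ ?_)
    · intro p q h1 h2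
      exact lt_of_le_of_lt (degree_add_le _ _) (max_lt h1 h2)
    · rw [degree_zero]; exact WithBot.bot_lt_coe _
    · intro i hi
      have := pow_le_aux hi
      rw [pow_succ] at this
      refine lt_of_le_of_lt (degree_add_le _ _) (max_lt ?_ ?_)
      · rw [degree_X_pow]; norm_cast; omega
      · refine lt_of_le_of_lt (degree_C_mul_X_pow_le _ _) ?_
        norm_cast; omega
  · rw [degree_X_pow]; norm_cast; omega

lemma NN_natDegree (n : ℕ) (hn : 0 < n) (a : L) : (NN n a).natDegree = 2 * 2 ^ n := by
  have h := NN_deg_aux n hn a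
  have e : NN n a = X ^ (2 * 2 ^ n) + ((∑ i ∈ Finset.range n, (X ^ (2 ^ i + 2 ^ n) + C (a ^ (2 ^ i)) * X ^ (2 ^ n - 2 ^ (i + 1)))) + X ^ (2 ^ n + 1)) := by
    rw [NN]; ring
  rw [e]
  apply natDegree_eq_of_degree_eq_some
  rw [degree_add_eq_left_of_degree_lt, degree_X_pow]
  rwa [degree_X_pow]

lemma NN_deriv (n : ℕ) (hn : 0 < n) (a : L) : derivative (NN n a) = 0 := by
  have h2 := two_eqL (L := L)
  have hn' : n ≠ 0 := hn.ne'
  have : ∑ i ∈ Finset.range n, derivative (X ^ (2 ^ i + 2 ^ n) + C (a ^ (2 ^ i)) * X ^ (2 ^ n - 2 ^ (i + 1)) : L[X]) = X ^ (2 ^ n) := by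
    rw [Finset.sum_eq_single_of_mem 0 (Finset.mem_range.2 hn)]
    · have := pow_le_aux (Finset.mem_range.2 hn)
      simp only [zero_add, pow_one, pow_zero] at *
      rw [derivative_add, derivative_C_mul, derivative_X_pow, derivative_X_pow]
      simp [Nat.cast_sub this, h2, hn']
    · intro i hi hi0
      have := pow_le_aux hi
      rw [derivative_add, derivative_C_mul, derivative_X_pow, derivative_X_pow]
      simp [Nat.cast_sub this, h2, hn', hi0]
  have h2' : (2 : L[X]) = 0 := by
    have := congrArg (C : L →+* L[X]) h2
    simp only [map_ofNat, map_zero] at this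
    exact this
  rw [NN, derivative_add, derivative_add, derivative_sum, this, derivative_X_pow, derivative_X_pow]
  simp [h2, hn']
  linear_combination X ^ (2 ^ n) * h2'

lemma NN_eval_zero (n : ℕ) (hn : 0 < n) (a : L) (ha : a ≠ 0) : (NN n a).eval 0 ≠ 0 := by
  have : (NN n a).eval 0 = a ^ (2 ^ (n - 1)) := by
    rw [NN]
    simp only [eval_add, eval_finsetSum, eval_mul, eval_pow, eval_X, eval_C]
    rw [Finset.sum_eq_single_of_mem (n - 1) (by simpa using hn)]
    · have : n - 1 + 1 = n := by omega
      simp [this]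
    · intro i hi hi0
      have : 2 ^ (i + 1) < 2 ^ n := by
        rw [Finset.mem_range] at hi
        exact Nat.pow_lt_pow_right (by norm_num) (by omega)
      rw [zero_pow (by positivity), zero_pow (by omega)]; simp
  rw [this]; exact pow_ne_zero _ ha

lemma NN_term {K : Type} [Field K] (n : ℕ) (b c : K) (hc : c ≠ 0) :
   ∑ i ∈ Finset.range n, (c ^ (2 ^ i + 2 ^ n) + b ^ (2 ^ i) * c ^ (2 ^ n - 2 ^ (i + 1))) =
   c ^ (2 ^ n) * ∑ i ∈ Finset.range n, (c ^ (2 ^ i) + (b / c ^ 2) ^ (2 ^ i)) := by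
  rw [Finset.mul_sum]
  apply Finset.sum_congr rfl
  intro i hi
  rw [pow_sub₀ _ hc (pow_le_aux hi), div_pow, ← pow_mul, mul_comm 2, ← pow_succ]
  field_simp
  rw [pow_add]; ring

lemma TT_add {K : Type} [Field K] [CharP K 2] (n : ℕ) (x y : K) : TT n (x + y) = ∑ i ∈ Finset.range n, (x ^ (2 ^ i) + y ^ (2 ^ i)) := by
  rw [TT]
  apply Finset.sum_congr rfl
  intro i hi
  rw [add_pow_char_pow]

lemma NN_eval (n : ℕ) (a c : L) (hc : c ≠ 0) (hcq : c ^ (2 ^ n) = c) :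
    (NN n a).eval c = c * TT n (c + a / c ^ 2) := by
  have h2 := two_eqL (L := L)
  rw [NN]
  simp only [eval_add, eval_finsetSum, eval_mul, eval_pow, eval_X, eval_C]
  rw [NN_term n a c hc, TT_add, hcq, mul_comm 2 (2 ^ n), pow_mul, hcq]
  linear_combination c ^ 2 * h2 + c * hcq

lemma NN_ratFunc [CharP (RatFunc L) 2] (n : ℕ) (a : L) :
    algebraMap L[X] (RatFunc L) (NN n a) = RatFunc.X ^ (2 ^ n) *
     (TT n (RatFunc.X + algebraMap L[X] (RatFunc L) (C a) / RatFunc.X ^ 2) + RatFunc.X ^ (2 ^ n) + RatFunc.X) := by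
  rw [NN]
  simp only [map_add, map_sum, map_mul, map_pow, RatFunc.algebraMap_X]
  rw [NN_term n _ _ RatFunc.X_ne_zero, TT_add]
  ring

lemma prodF (n : ℕ) (hn : 0 < n) (F : Finset L) (hF : ∀ x, x ∈ F ↔ x ^ (2 ^ n) = x) (hcard : F.card = 2 ^ n) :
    (X ^ (2 ^ n) + X : L[X]) = ∏ c ∈ F, (X - C c) := by
  have h2 := two_eqL (L := L)
  have hq : 2 ≤ 2 ^ n := Nat.pow_le_pow_right (n := 2) (by norm_num) hn
  have hm : (X ^ (2 ^ n) + X : L[X]).Monic := monic_X_pow_add (by rw [degree_X]; norm_cast)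
  have hd : (X ^ (2 ^ n) + X : L[X]).natDegree = 2 ^ n := by
    apply natDegree_eq_of_degree_eq_some
    rw [degree_add_eq_left_of_degree_lt, degree_X_pow]
    rw [degree_X_pow, degree_X]; norm_cast
  refine eq_of_monic_of_dvd_of_natDegree_le (monic_prod_of_monic _ _ fun c _ => monic_X_sub_C c) hm ?_ ?_
  · apply Finset.prod_dvd_of_coprime
    · intro c _ d _ hcd
      exact isCoprime_X_sub_C_of_isUnit_sub (sub_ne_zero.2 hcd).isUnit
    · intro c hc
      rw [dvd_iff_isRoot, IsRoot]
      have := (hF c).1 hc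
      simp [this]
      linear_combination c * h2
  · rw [hd, natDegree_prod_of_monic _ _ (fun c _ => monic_X_sub_C c)]
    simp [hcard]

lemma hhN (n : ℕ) (hn : 0 < n) (F : Finset L) (hF : ∀ x, x ∈ F ↔ x ^ (2 ^ n) = x) (hcard : F.card = 2 ^ n)
    (a : L) (ha : a ≠ 0) :
    hh (algebraMap L[X] (RatFunc L) (NN n a * X) / algebraMap L[X] (RatFunc L) ((X ^ (2 ^ n) + X) ^ 2))
    + 2 * ((F.erase 0).filter (fun c => TT n (c + a / c ^ 2) = 0)).card = 2 * 2 ^ n := by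
  have h0 : (0 : L) ∈ F := by rw [hF]; simp
  set Z := (F.erase 0).filter (fun c => TT n (c + a / c ^ 2) = 0) with hZ
  set Z' := (F.erase 0).filter (fun c => ¬ TT n (c + a / c ^ 2) = 0) with hZ'
  have hcc : Z.card + Z'.card + 1 = 2 ^ n := by
    rw [Finset.card_filter_add_card_filter_not, Finset.card_erase_add_one h0, hcard]
  have hp : (X ^ (2 ^ n) + X : L[X]) = X * ((∏ c ∈ Z, (X - C c)) * ∏ c ∈ Z', (X - C c)) := by
    rw [prodF n hn F hF hcard, Finset.prod_filter_mul_prod_filter_not, ← Finset.mul_prod_erase F _ h0]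
    simp
  have hdvd : ∏ c ∈ Z, (X - C c) ^ 2 ∣ NN n a := by
    apply Finset.prod_dvd_of_coprime
    · intro c _ d _ hcd
      exact (isCoprime_X_sub_C_of_isUnit_sub (sub_ne_zero.2 hcd).isUnit).pow
    · intro c hc
      rw [hZ, Finset.mem_filter, Finset.mem_erase, hF] at hc
      have hN : NN n a ≠ 0 := by
        intro h; have := NN_eval_zero n hn a ha; rw [h] at this; simp at this
      rw [← le_rootMultiplicity_iff hN]
      have := (one_lt_rootMultiplicity_iff_isRoot hN (t := c)).2
      apply this
      refine ⟨?_, ?_⟩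
      · rw [IsRoot, NN_eval n a c hc.1.1 hc.1.2, hc.2, mul_zero]
      · rw [NN_deriv n hn]; simp
  obtain ⟨M, hM⟩ := hdvd
  rw [Finset.prod_pow] at hM
  set gZ := ∏ c ∈ Z, (X - C c) with hgZ
  set gZ' := ∏ c ∈ Z', (X - C c) with hgZ'
  have gZ0 : gZ ≠ 0 := (monic_prod_of_monic _ _ fun c _ => monic_X_sub_C c).ne_zero
  have gZ'0 : gZ' ≠ 0 := (monic_prod_of_monic _ _ fun c _ => monic_X_sub_C c).ne_zero
  have dZ : gZ.natDegree = Z.card := by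
    rw [hgZ, natDegree_prod_of_monic _ _ (fun c _ => monic_X_sub_C c)]; simp
  have dZ' : gZ'.natDegree = Z'.card := by
    rw [hgZ', natDegree_prod_of_monic _ _ (fun c _ => monic_X_sub_C c)]; simp
  have hN0 : (NN n a).eval 0 ≠ 0 := NN_eval_zero n hn a ha
  have M0 : M ≠ 0 := by rintro rfl; rw [hM] at hN0; simp at hN0
  have dM : M.natDegree + 2 * Z.card = 2 * 2 ^ n := by
    rw [← NN_natDegree n hn a, hM, natDegree_mul (pow_ne_zero _ gZ0) M0, natDegree_pow, dZ]; ring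
  have cop : ∀ c : L, (NN n a).eval c ≠ 0 → IsCoprime M (X - C c) := by
    intro c hc
    apply IsCoprime.symm
    rw [(irreducible_X_sub_C c).coprime_iff_not_dvd, dvd_iff_isRoot]
    intro h
    apply hc
    rw [hM, eval_mul, h.eq_zero, mul_zero]
  have c0 : IsCoprime M X := by simpa using cop 0 hN0
  have c1 : IsCoprime M gZ' := by
    apply IsCoprime.prod_right
    intro c hc
    rw [hZ', Finset.mem_filter, Finset.mem_erase, hF] at hc
    apply cop
    rw [NN_eval n a c hc.1.1 hc.1.2]
    exact mul_ne_zero hc.1.1 hc.2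
  have e : algebraMap L[X] (RatFunc L) (NN n a * X) / algebraMap L[X] (RatFunc L) ((X ^ (2 ^ n) + X) ^ 2)
     = algebraMap L[X] (RatFunc L) M / algebraMap L[X] (RatFunc L) (X * gZ' ^ 2) := by
    rw [hp, hM]
    have k1 : algebraMap L[X] (RatFunc L) gZ ≠ 0 := by simpa using gZ0
    have k2 : algebraMap L[X] (RatFunc L) gZ' ≠ 0 := by simpa using gZ'0
    have k3 : (RatFunc.X : RatFunc L) ≠ 0 := RatFunc.X_ne_zero
    simp only [map_mul, map_pow, RatFunc.algebraMap_X]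
    field_simp
  have dd : (X * gZ' ^ 2).natDegree = 1 + 2 * Z'.card := by
    rw [natDegree_mul X_ne_zero (pow_ne_zero _ gZ'0), natDegree_pow, dZ', natDegree_X]
  rw [e, hh_eq (mul_ne_zero X_ne_zero (pow_ne_zero _ gZ'0)) (IsCoprime.mul_right c0 c1.pow_right), dd]
  omega

lemma kloost (n : ℕ) (hn : 0 < n) (F : Finset L) (hF : ∀ x, x ∈ F ↔ x ^ (2 ^ n) = x) (hcard : F.card = 2 ^ n)
    (a : L) (ha : a ≠ 0) (haq : a ^ (2 ^ n) = a) :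
    ((2 ^ n : ℤ) - 1 - 2 * ((F.erase 0).filter (fun c => TT n (c + a / c ^ 2) = 0)).card) ^ 2 ≤ 4 * 2 ^ n := by
  have h2 := two_eq (L := L)
  have : CharP (RatFunc L) 2 := CharTwo.of_one_ne_zero_of_two_eq_zero one_ne_zero h2
  have hq : 2 ≤ 2 ^ n := Nat.pow_le_pow_right (n := 2) (by norm_num) hn
  set A : RatFunc L := algebraMap L[X] (RatFunc L) (C a) with hA
  have hAq : A ^ (2 ^ n) = A := by rw [hA, ← map_pow, ← map_pow, haq]
  have k3 : (RatFunc.X : RatFunc L) ≠ 0 := RatFunc.X_ne_zero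
  set x : RatFunc L := RatFunc.X with hx
  set θ : RatFunc L := x + A / x ^ 2 with hθ
  set v := TT n θ with hv
  have hv2 : v ^ 2 + v = x ^ (2 ^ n) + A / (x ^ (2 ^ n)) ^ 2 + θ := by
    rw [hv, TT_sq h2]
    conv_lhs => rw [hθ]
    rw [add_pow_char_pow, div_pow, hAq, ← pow_mul, ← pow_mul, mul_comm 2]
  have hQ : (EW a θ).Equation x 0 := by
    rw [EW_eq, ← hA, hθ]
    field_simp
    grind
  have hP : (EW a θ).Equation (x ^ (2 ^ n)) (x ^ (2 ^ n) * v) := by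
    rw [EW_eq, ← hA]
    have : x ^ (2 ^ n) ≠ 0 := pow_ne_zero _ k3
    generalize x ^ (2 ^ n) = w at *
    have e : (w * v) ^ 2 + w * (w * v) = w ^ 2 * (v ^ 2 + v) := by ring
    rw [e, hv2]
    field_simp
    ring
  have inj := IsFractionRing.injective L[X] (RatFunc L)
  have hxx : x ^ (2 ^ n) ≠ x := by
    intro h
    rw [hx, ← RatFunc.algebraMap_X, ← map_pow] at h
    have := congrArg natDegree (inj h)
    simp at this
    omega
  have key := ht_cs ha (.some _ _ (EW_nonsing ha hP)) (.some _ _ (EW_nonsing ha hQ)) (by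
    have := hh_eq (L := L) (f := X) (g := 1) one_ne_zero isCoprime_one_right
    simpa [ht] using this)
  rw [ht_add_of_ne _ _ hxx] at key
  have hP2 : ht (.some _ _ (EW_nonsing ha hP)) = 2 ^ n := by
    have := hh_eq (L := L) (f := X ^ (2 ^ n)) (g := 1) one_ne_zero isCoprime_one_right
    simpa [ht] using this
  rw [hP2] at key
  have hs : x ^ (2 ^ n) + x ≠ 0 := by
    intro h; apply hxx; grind
  have e : ((x ^ 2 ^ n * v + 0) / (x ^ 2 ^ n + x)) ^ 2 + (x ^ 2 ^ n * v + 0) / (x ^ 2 ^ n + x) + θ + x ^ 2 ^ n + x =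
     algebraMap L[X] (RatFunc L) (NN n a * X) / algebraMap L[X] (RatFunc L) ((X ^ (2 ^ n) + X) ^ 2) := by
    rw [map_mul, NN_ratFunc]
    simp only [map_pow, map_add, RatFunc.algebraMap_X]
    rw [← hx, ← hA, ← hθ, ← hv]
    have hw : x ^ (2 ^ n) ≠ 0 := pow_ne_zero _ k3
    generalize x ^ (2 ^ n) = w at *
    have e0 : θ * x ^ 2 = x ^ 3 + A := by rw [hθ]; field_simp
    have e1 : w ^ 2 * (v ^ 2 + v) = w ^ 3 + A + w ^ 2 * θ := by rw [hv2]; field_simp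
    field_simp
    grind
  rw [e] at key
  have := hhN n hn F hF hcard a ha
  generalize hh (algebraMap L[X] (RatFunc L) (NN n a * X) / algebraMap L[X] (RatFunc L) ((X ^ (2 ^ n) + X) ^ 2)) = H at *
  zify at this
  push_cast at key
  have e3 : (H : ℤ) - 2 ^ n - 1 =
    (2 ^ n : ℤ) - 1 - 2 * ((F.erase 0).filter (fun c => TT n (c + a / c ^ 2) = 0)).card := by
    linarith
  rw [e3] at key
  exact key
end


section
open Polynomial Classical
variable {L : Type} [Field L] [CharP L 2]

/-- sign character -/
noncomputable def psi (n : ℕ) (z : L) : ℤ := if TT n z = 0 then 1 else -1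

lemma TT_add' (n : ℕ) (x y : L) : TT n (x + y) = TT n x + TT n y := by
  rw [TT_add, Finset.sum_add_distrib]; rfl

lemma TT_zo (n : ℕ) (x : L) (hx : x ^ (2 ^ n) = x) : TT n x = 0 ∨ TT n x = 1 := by
  have h2 := two_eqL (L := L)
  have h := TT_sq h2 n x
  rw [hx] at h
  have : TT n x * (TT n x - 1) = 0 := by linear_combination h + (x - TT n x) * h2
  rcases mul_eq_zero.1 this with h | h
  · exact Or.inl h
  · exact Or.inr (sub_eq_zero.1 h)

lemma psi_add (n : ℕ) (x y : L) (hx : x ^ (2 ^ n) = x) (hy : y ^ (2 ^ n) = y) :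
    psi n (x + y) = psi n x * psi n y := by
  have h2 : (1 : L) + 1 = 0 := by rw [one_add_one_eq_two]; exact two_eqL
  rcases TT_zo n x hx with h | h <;> rcases TT_zo n y hy with h' | h' <;> 
    simp [psi, TT_add', h, h', h2]

lemma psi_sq (n : ℕ) (x : L) (hx : x ^ (2 ^ n) = x) : psi n (x ^ 2) = psi n x := by
  have h2 := two_eqL (L := L)
  have : TT n (x ^ 2) = TT n x := by
    have e : TT n (x ^ 2) = (TT n x) ^ 2 := by
      rw [TT, TT, sum_pow_char]
      apply Finset.sum_congr rfl
      intro i _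
      rw [← pow_mul, ← pow_mul, mul_comm]
    have h := TT_sq h2 n x
    rw [hx] at h
    rw [e]; linear_combination h + (x - TT n x) * h2
  rw [psi, this, psi]

lemma psi_pm (n : ℕ) (x : L) : psi n x = 1 ∨ psi n x = -1 := by
  unfold psi; split_ifs <;> simp


lemma exists_tr (n : ℕ) (hn : 0 < n) (F : Finset L) (hF : ∀ x, x ∈ F ↔ x ^ (2 ^ n) = x) (hcard : F.card = 2 ^ n)
    : ∃ y ∈ F, TT n y ≠ 0 := by
  by_contra! h
  have hz : (TT n (X : L[X])) = 0 := by
    apply eq_zero_of_natDegree_lt_card_of_eval_eq_zero' _ F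
    · intro y hy
      rw [← h y hy, TT, TT, eval_finsetSum]
      simp
    · rw [hcard]
      have : (TT n (X : L[X])).natDegree ≤ 2 ^ (n - 1) := by
        apply natDegree_sum_le_of_forall_le
        intro i hi
        rw [natDegree_X_pow]
        rw [Finset.mem_range] at hi
        exact Nat.pow_le_pow_right (by norm_num) (by omega)
      exact lt_of_le_of_lt this (Nat.pow_lt_pow_right (by norm_num) (by omega))
  have h1 := congrArg (fun p => coeff p 1) hz
  simp only [TT, finsetSum_coeff, coeff_X_pow, coeff_zero] at h1
  rw [Finset.sum_eq_single_of_mem 0 (Finset.mem_range.2 hn)] at h1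
  · simp at h1
  · intro i _ hi
    have : 1 < 2 ^ i := Nat.one_lt_two_pow hi
    rw [if_neg (by omega)]

lemma sum_psi (n : ℕ) (hn : 0 < n) (F : Finset L) (hF : ∀ x, x ∈ F ↔ x ^ (2 ^ n) = x) (hcard : F.card = 2 ^ n)
    : ∑ y ∈ F, psi n y = 0 := by
  obtain ⟨y0, hy0, ht⟩ := exists_tr n hn F hF hcard
  have h2 := two_eqL (L := L)
  have hy : psi n y0 = -1 := by simp [psi, ht]
  have hmem : ∀ y ∈ F, y + y0 ∈ F := by
    intro y hy
    rw [hF] at *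
    rw [add_pow_char_pow, hy, hy0]
  have : ∑ y ∈ F, psi n y = ∑ y ∈ F, psi n (y + y0) := by
    refine Finset.sum_bij' (fun y _ => y + y0) (fun y _ => y + y0) hmem hmem ?_ ?_ ?_
    · intro y _; linear_combination y0 * h2
    · intro y _; linear_combination y0 * h2
    · intro y _
      congr 1
      linear_combination -y0 * h2
  have e : ∑ y ∈ F, psi n (y + y0) = - ∑ y ∈ F, psi n y := by
    rw [← Finset.sum_neg_distrib]
    apply Finset.sum_congr rfl
    intro y hyF
    rw [psi_add n y y0 ((hF _).1 hyF) ((hF _).1 hy0), hy]; ring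
  omega

lemma sum_psi_mul (n : ℕ) (hn : 0 < n) (F : Finset L) (hF : ∀ x, x ∈ F ↔ x ^ (2 ^ n) = x) (hcard : F.card = 2 ^ n)
    (s : L) (hs : s ≠ 0) (hsq : s ^ (2 ^ n) = s) : ∑ y ∈ F, psi n (s * y) = 0 := by
  rw [← sum_psi n hn F hF hcard]
  refine Finset.sum_bij' (fun y _ => s * y) (fun y _ => s⁻¹ * y) ?_ ?_ ?_ ?_ ?_
  · intro y hy; rw [hF] at *; rw [mul_pow, hsq, hy]
  · intro y hy; rw [hF] at *; rw [mul_pow, inv_pow, hsq, hy]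
  · intro y _; field_simp
  · intro y _; field_simp
  · intro y _; rfl


lemma fiber_sum (n : ℕ) (hn : 0 < n) (F : Finset L) (hF : ∀ x, x ∈ F ↔ x ^ (2 ^ n) = x) (hcard : F.card = 2 ^ n)
    (U : Finset L) (hU : ∀ x, x ∈ U ↔ x ^ (2 ^ n + 1) = 1) (hUcard : U.card = 2 ^ n + 1)
    (f : L → ℤ) : ∑ x ∈ U, f (x + x⁻¹) + ∑ x ∈ F.erase 0, f (x + x⁻¹) = 2 * ∑ y ∈ F, f y := by
  have h2 := two_eqL (L := L)
  have h0 : (0 : L) ∈ F := by rw [hF]; simp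
  have U0 : ∀ x ∈ U, x ≠ 0 := by
    rintro x hx rfl; rw [hU] at hx; simp at hx
  have Uinv : ∀ x ∈ U, x ^ (2 ^ n) = x⁻¹ := by
    intro x hx
    have h := U0 x hx
    rw [hU, pow_succ] at hx
    exact eq_inv_of_mul_eq_one_left hx
  have mU : ∀ x ∈ U, x + x⁻¹ ∈ F := by
    intro x hx
    rw [hF, add_pow_char_pow, inv_pow, Uinv x hx, inv_inv, add_comm]
  have mF : ∀ x ∈ F.erase 0, x + x⁻¹ ∈ F := by
    intro x hx
    rw [Finset.mem_erase, hF] at hx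
    rw [hF, add_pow_char_pow, inv_pow, hx.2]
  have sq1 : ∀ x : L, x ≠ 0 → x + x⁻¹ = 0 → x = 1 := by
    intro x hx h
    have : (x + 1) ^ 2 = 0 := by
      have : x * (x + x⁻¹) = 0 := by rw [h, mul_zero]
      rw [mul_add, mul_inv_cancel₀ hx] at this
      linear_combination this + x * h2
    have := pow_eq_zero_iff (two_ne_zero) |>.1 this
    linear_combination this - h2
  have hle : ∀ y ∈ F, (U.filter (fun x => x + x⁻¹ = y)).card + ((F.erase 0).filter (fun x => x + x⁻¹ = y)).card ≤ 2 := by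
    intro y hy
    by_cases hy0 : y = 0
    · subst hy0
      have a1 : (U.filter (fun x => x + x⁻¹ = 0)).card ≤ 1 := by
        rw [Finset.card_le_one_iff_subset_singleton]
        refine ⟨1, fun x hx => ?_⟩
        rw [Finset.mem_filter] at hx
        rw [Finset.mem_singleton]; exact sq1 x (U0 x hx.1) hx.2
      have a2 : ((F.erase 0).filter (fun x => x + x⁻¹ = 0)).card ≤ 1 := by
        rw [Finset.card_le_one_iff_subset_singleton]
        refine ⟨1, fun x hx => ?_⟩
        rw [Finset.mem_filter, Finset.mem_erase] at hx
        rw [Finset.mem_singleton]; exact sq1 x hx.1.1 hx.2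
      omega
    · rw [← Finset.card_union_of_disjoint]
      · have hz : ∀ x ∈ U.filter (fun x => x + x⁻¹ = y) ∪ (F.erase 0).filter (fun x => x + x⁻¹ = y), x ≠ 0 ∧ x + x⁻¹ = y := by
          intro x hx
          rw [Finset.mem_union, Finset.mem_filter, Finset.mem_filter, Finset.mem_erase] at hx
          rcases hx with hx | hx
          · exact ⟨U0 x hx.1, hx.2⟩
          · exact ⟨hx.1.1, hx.2⟩
        generalize U.filter (fun x => x + x⁻¹ = y) ∪ (F.erase 0).filter (fun x => x + x⁻¹ = y) = A at *
        rcases A.eq_empty_or_nonempty with h | ⟨x0, hx0⟩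
        · simp [h]
        · have : A ⊆ {x0, x0 + y} := by
            intro x hx
            obtain ⟨k1, k2⟩ := hz x hx
            obtain ⟨l1, l2⟩ := hz x0 hx0
            have m1 : x ^ 2 + y * x + 1 = 0 := by
              rw [← k2]; field_simp; linear_combination (x ^ 2 + 1) * h2
            have m2 : x0 ^ 2 + y * x0 + 1 = 0 := by
              rw [← l2]; field_simp; linear_combination (x0 ^ 2 + 1) * h2
            have : (x - x0) * (x - (x0 + y)) = 0 := by
              linear_combination m1 - m2 + (x0 ^ 2 - x * x0 - y * x + x0 * y) * h2
            rw [Finset.mem_insert, Finset.mem_singleton]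
            rcases mul_eq_zero.1 this with h | h
            · left; exact sub_eq_zero.1 h
            · right; exact sub_eq_zero.1 h
          exact (Finset.card_le_card this).trans (Finset.card_le_two)
      · rw [Finset.disjoint_left]
        intro x hx hx'
        rw [Finset.mem_filter] at hx hx'
        have h1 := Uinv x hx.1
        have h3 := (hF x).1 (Finset.mem_of_mem_erase hx'.1)
        rw [h3] at h1
        apply hy0
        rw [← hx.2, ← h1]
        linear_combination x * h2
  have c1 : U.card = ∑ y ∈ F, (U.filter (fun x => x + x⁻¹ = y)).card :=
    Finset.card_eq_sum_card_fiberwise mU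
  have c2 : (F.erase 0).card = ∑ y ∈ F, ((F.erase 0).filter (fun x => x + x⁻¹ = y)).card :=
    Finset.card_eq_sum_card_fiberwise mF
  have hsum : ∑ y ∈ F, ((U.filter (fun x => x + x⁻¹ = y)).card + ((F.erase 0).filter (fun x => x + x⁻¹ = y)).card) = ∑ y ∈ F, 2 := by
    rw [Finset.sum_add_distrib, ← c1, ← c2, hUcard, Finset.card_erase_of_mem h0, hcard]
    simp [hcard]
    have : 0 < 2 ^ n := by positivity
    omega
  have heq := (Finset.sum_eq_sum_iff_of_le hle).1 hsum
  rw [← Finset.sum_fiberwise_of_maps_to mU, ← Finset.sum_fiberwise_of_maps_to mF, ← Finset.sum_add_distrib, Finset.mul_sum]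
  apply Finset.sum_congr rfl
  intro y hy
  have e1 : ∑ x ∈ U with x + x⁻¹ = y, f (x + x⁻¹) = (U.filter (fun x => x + x⁻¹ = y)).card * f y := by
    rw [Finset.sum_congr rfl (g := fun _ => f y) (by intro x hx; rw [(Finset.mem_filter.1 hx).2])]
    simp
  have e2 : ∑ x ∈ F.erase 0 with x + x⁻¹ = y, f (x + x⁻¹) = ((F.erase 0).filter (fun x => x + x⁻¹ = y)).card * f y := by
    rw [Finset.sum_congr rfl (g := fun _ => f y) (by intro x hx; rw [(Finset.mem_filter.1 hx).2])]
    simp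
  rw [e1, e2, ← add_mul]
  have := heq y hy
  zify at this
  rw [this]

lemma U_bound_s (n : ℕ) (hn : 0 < n) (F : Finset L) (hF : ∀ x, x ∈ F ↔ x ^ (2 ^ n) = x) (hcard : F.card = 2 ^ n)
    (U : Finset L) (hU : ∀ x, x ∈ U ↔ x ^ (2 ^ n + 1) = 1) (hUcard : U.card = 2 ^ n + 1)
    (s : L) (hs : s ≠ 0) (hsq : s ^ (2 ^ n) = s) :
    (∑ x ∈ U, psi n (s * (x + x⁻¹))) ^ 2 ≤ 4 * 2 ^ n ∧ Odd (∑ x ∈ U, psi n (s * (x + x⁻¹))) := by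
  have h0 : (0 : L) ∈ F := by rw [hF]; simp
  have h1 := fiber_sum n hn F hF hcard U hU hUcard (fun y => psi n (s * y))
  rw [sum_psi_mul n hn F hF hcard s hs hsq] at h1
  have e1 : ∑ x ∈ F.erase 0, psi n (s * (x + x⁻¹)) = ∑ c ∈ F.erase 0, psi n (c + s ^ 4 / c ^ 2) := by
    refine Finset.sum_bij' (fun y _ => s * y) (fun y _ => s⁻¹ * y) ?_ ?_ ?_ ?_ ?_
    · intro y hy; rw [Finset.mem_erase, hF] at *; rw [mul_pow, hsq, hy.2]; exact ⟨mul_ne_zero hs hy.1, rfl⟩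
    · intro y hy; rw [Finset.mem_erase, hF] at *; rw [mul_pow, inv_pow, hsq, hy.2]
      exact ⟨mul_ne_zero (inv_ne_zero hs) hy.1, rfl⟩
    · intro y _; field_simp
    · intro y _; field_simp
    · intro y hy
      rw [Finset.mem_erase, hF] at hy
      obtain ⟨hy0, hyq⟩ := hy
      have k1 : (s * y) ^ (2 ^ n) = s * y := by rw [mul_pow, hsq, hyq]
      have k2 : (s * y⁻¹) ^ (2 ^ n) = s * y⁻¹ := by rw [mul_pow, inv_pow, hsq, hyq]
      have e : s ^ 4 / (s * y) ^ 2 = (s * y⁻¹) ^ 2 := by field_simp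
      rw [mul_add, psi_add n _ _ k1 k2, e, psi_add n _ _ k1 (by rw [pow_right_comm, k2]), psi_sq n _ k2]
  have e2 : ∑ c ∈ F.erase 0, psi n (c + s ^ 4 / c ^ 2) = 
      2 * ((F.erase 0).filter (fun c => TT n (c + s ^ 4 / c ^ 2) = 0)).card - ((2 ^ n : ℤ) - 1) := by
    have c := Finset.card_filter_add_card_filter_not (s := F.erase 0) (fun c => TT n (c + s ^ 4 / c ^ 2) = 0)
    have c' := Finset.card_erase_add_one h0
    rw [hcard] at c'
    simp only [psi]
    rw [Finset.sum_ite]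
    simp only [Finset.sum_const, nsmul_eq_mul]
    zify at c c'
    linarith
  have e3 : ∑ x ∈ U, psi n (s * (x + x⁻¹)) = (2 ^ n : ℤ) - 1 - 2 * ((F.erase 0).filter (fun c => TT n (c + s ^ 4 / c ^ 2) = 0)).card := by
    rw [e1, e2] at h1
    linarith
  rw [e3]
  refine ⟨kloost n hn F hF hcard (s ^ 4) (pow_ne_zero _ hs) (by rw [← pow_mul, mul_comm, pow_mul, hsq]), ?_⟩
  have : Even ((2 : ℤ) ^ n) := by rw [Int.even_pow]; exact ⟨even_two, hn.ne'⟩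
  obtain ⟨k, hk⟩ := this
  exact ⟨k - 1 - ((F.erase 0).filter (fun c => TT n (c + s ^ 4 / c ^ 2) = 0)).card, by rw [hk]; ring⟩

lemma U_bound (n : ℕ) (hn : 0 < n) (F : Finset L) (hF : ∀ x, x ∈ F ↔ x ^ (2 ^ n) = x) (hcard : F.card = 2 ^ n)
    (U : Finset L) (hU : ∀ x, x ∈ U ↔ x ^ (2 ^ n + 1) = 1) (hUcard : U.card = 2 ^ n + 1)
    (hL : ∀ c : L, c ^ (2 ^ n * 2 ^ n) = c) (c : L) (hc : c ≠ 0) :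
    (∑ x ∈ U, psi n (c * x + (c * x) ^ (2 ^ n))) ^ 2 ≤ 4 * 2 ^ n ∧ Odd (∑ x ∈ U, psi n (c * x + (c * x) ^ (2 ^ n))) := by
  set s := (c ^ (2 ^ n + 1)) ^ (2 ^ (n - 1)) with hs
  have hs0 : s ≠ 0 := pow_ne_zero _ (pow_ne_zero _ hc)
  have hN : (c ^ (2 ^ n + 1)) ^ (2 ^ n) = c ^ (2 ^ n + 1) := by
    rw [← pow_mul, add_mul, pow_add, hL, one_mul, pow_succ, mul_comm]
  have hsq : s ^ (2 ^ n) = s := by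
    rw [hs, ← pow_mul, mul_comm (2 ^ (n - 1)), pow_mul, hN]
  have hs2 : s * s = c ^ (2 ^ n + 1) := by
    rw [← hN, hs, ← pow_two, ← pow_mul, ← pow_succ, Nat.sub_add_cancel hn]
  set w := c / s with hw
  have hcw : c = s * w := by rw [hw]; field_simp
  have hw1 : w ^ (2 ^ n + 1) = 1 := by
    rw [hw, div_pow, ← hs2, pow_succ, hsq]; field_simp
  have hw0 : w ≠ 0 := by rw [hw]; exact div_ne_zero hc hs0
  have := U_bound_s n hn F hF hcard U hU hUcard s hs0 hsq
  have e : ∑ x ∈ U, psi n (c * x + (c * x) ^ (2 ^ n)) = ∑ x ∈ U, psi n (s * (x + x⁻¹)) := by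
    refine Finset.sum_bij' (fun y _ => w * y) (fun y _ => w⁻¹ * y) ?_ ?_ ?_ ?_ ?_
    · intro y hy; rw [hU] at *; rw [mul_pow, hw1, hy, one_mul]
    · intro y hy; rw [hU] at *; rw [mul_pow, inv_pow, hw1, hy]; simp
    · intro y _; field_simp
    · intro y _; field_simp
    · intro y hy
      have : (w * y) ^ (2 ^ n) = (w * y)⁻¹ := by
        rw [hU] at hy
        apply eq_inv_of_mul_eq_one_left
        rw [← pow_succ, mul_pow, hw1, hy, one_mul]
      rw [hcw, mul_assoc, mul_pow, hsq, this, mul_add]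
  rw [e]; exact this
end

lemma final_bound (q : ℕ) (S : ℤ) (h : S ^ 2 ≤ 4 * q) (ho : Odd S) :
    |S| ≤ (Nat.sqrt (4 * q) : ℤ) - (if Odd (Nat.sqrt (4 * q)) then 0 else 1) := by
  have h1 : S.natAbs ≤ Nat.sqrt (4 * q) := by
    rw [Nat.le_sqrt']; zify; rw [sq_abs]; exact h
  have h2 : Odd S.natAbs := Int.natAbs_odd.2 ho
  rw [Int.abs_eq_natAbs]
  split_ifs with h3
  · omega
  · have : S.natAbs ≠ Nat.sqrt (4 * q) := fun h => h3 (h ▸ h2)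
    omega


lemma exists_roots (n : ℕ) (hn : 0 < n) : ∃ (L : Type) (_ : Field L) (_ : CharP L 2) (r u : L),
    IsPrimitiveRoot r (2 ^ n - 1) ∧ IsPrimitiveRoot u (2 ^ n + 1) ∧ ∀ c : L, c ^ (2 ^ n * 2 ^ n) = c := by
  let L := GaloisField 2 (2 * n)
  have hc : Nat.card L = 2 ^ n * 2 ^ n := by
    rw [GaloisField.card 2 (2 * n) (by omega), ← pow_add, two_mul]
  have hfin : Finite L := inferInstance
  have : Fintype L := Fintype.ofFinite L
  have hcard : Fintype.card L = 2 ^ n * 2 ^ n := by rw [← hc, Nat.card_eq_fintype_card]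
  obtain ⟨g, hg⟩ := IsCyclic.exists_ofOrder_eq_natCard (α := Lˣ)
  have hq : 2 ≤ 2 ^ n := Nat.pow_le_pow_right (n := 2) (by norm_num) hn
  have hcu : Nat.card Lˣ = (2 ^ n + 1) * (2 ^ n - 1) := by
    rw [Nat.card_units, hc]
    obtain ⟨k, hk⟩ := Nat.exists_eq_add_of_le hq
    rw [hk]
    have : 2 + k - 1 = k + 1 := by omega
    rw [this]
    have : (2 + k) * (2 + k) = (2 + k + 1) * (k + 1) + 1 := by ring
    omega
  have hp := IsPrimitiveRoot.orderOf g
  rw [hg, hcu] at hp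
  have hp' : IsPrimitiveRoot (g : L) _ := IsPrimitiveRoot.coe_units_iff.2 hp
  have hpos : 0 < (2 ^ n + 1) * (2 ^ n - 1) := Nat.mul_pos (by omega) (by omega)
  refine ⟨L, inferInstance, inferInstance, (g : L) ^ (2 ^ n + 1), (g : L) ^ (2 ^ n - 1), hp'.pow hpos rfl,
    hp'.pow hpos (mul_comm _ _), ?_⟩
  intro c
  rw [← hcard]; exact FiniteField.pow_card c

theorem stmt_17 (n : ℕ) (hn : 0 < n) :
    ∃ S : Fin (2 ^ n - 1) → (ZMod (2 ^ n + 1) → ℤ),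
      Function.Injective S ∧
      (∀ i j, S i j = 1 ∨ S i j = -1) ∧
      (∀ i, ∀ t : ZMod (2 ^ n + 1), t ≠ 0 →
        |∑ j : ZMod (2 ^ n + 1), S i j * S i (j + t)| ≤
          (Nat.sqrt (4 * 2 ^ n) : ℤ) - (if Odd (Nat.sqrt (4 * 2 ^ n)) then 0 else 1)) ∧
      (∀ i i', i ≠ i' → ∀ t : ZMod (2 ^ n + 1),
        |∑ j : ZMod (2 ^ n + 1), S i j * S i' (j + t)| ≤
          (Nat.sqrt (4 * 2 ^ n) : ℤ) - (if Odd (Nat.sqrt (4 * 2 ^ n)) then 0 else 1)) := by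
  classical
  obtain ⟨L, _, _, r, u, hr, hu, hL⟩ := exists_roots n hn
  have h2 := two_eqL (L := L)
  have hq : 2 ≤ 2 ^ n := Nat.pow_le_pow_right (n := 2) (by norm_num) hn
  let F : Finset L := insert 0 (Polynomial.nthRootsFinset (2 ^ n - 1) 1)
  have hF : ∀ x, x ∈ F ↔ x ^ (2 ^ n) = x := by
    intro x
    have e : x ^ (2 ^ n) = x ^ (2 ^ n - 1) * x := by rw [← pow_succ, Nat.sub_add_cancel (by omega)]
    rw [Finset.mem_insert, Polynomial.mem_nthRootsFinset (by omega), e]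
    by_cases hx : x = 0
    · simp [hx]
    · simp [hx]
  have hcard : F.card = 2 ^ n := by
    rw [Finset.card_insert_of_notMem, hr.card_nthRootsFinset]
    · omega
    · rw [Polynomial.mem_nthRootsFinset (by omega), zero_pow (by omega)]; simp
  let U : Finset L := Polynomial.nthRootsFinset (2 ^ n + 1) 1
  have hU : ∀ x, x ∈ U ↔ x ^ (2 ^ n + 1) = 1 := fun x => Polynomial.mem_nthRootsFinset (by omega) 1
  have hUcard : U.card = 2 ^ n + 1 := hu.card_nthRootsFinset
  have hu1 : u ^ (2 ^ n + 1) = 1 := hu.pow_eq_one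
  have hr1 : r ^ (2 ^ n - 1) = 1 := hr.pow_eq_one
  have hr0 : r ≠ 0 := hr.ne_zero (by omega)
  have hu0 : u ≠ 0 := hu.ne_zero (by omega)
  have huinj : ∀ j k : ZMod (2 ^ n + 1), u ^ j.val = u ^ k.val → j = k := by
    intro j k h
    exact ZMod.val_injective _ (hu.pow_inj (ZMod.val_lt j) (ZMod.val_lt k) h)
  have huadd : ∀ j k : ZMod (2 ^ n + 1), u ^ (j + k).val = u ^ j.val * u ^ k.val := by
    intro j k
    rw [ZMod.val_add, ← pow_add]
    exact (pow_eq_pow_mod _ hu1).symm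
  have hrF : ∀ i : ℕ, (r ^ i) ^ (2 ^ n) = r ^ i := by
    intro i
    rw [pow_right_comm]
    congr 1
    conv_rhs => rw [← one_mul r, ← hr1, ← pow_succ, Nat.sub_add_cancel (by omega)]
  have himg : Finset.image (fun j : ZMod (2 ^ n + 1) => u ^ j.val) Finset.univ = U := by
    apply Finset.eq_of_subset_of_card_le
    · intro x hx
      rw [Finset.mem_image] at hx
      obtain ⟨j, _, rfl⟩ := hx
      rw [hU, pow_right_comm, hu1, one_pow]
    · rw [hUcard, Finset.card_image_of_injective _ (fun j k h => huinj j k h)]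
      simp [ZMod.card]
  let tr : L → L := fun z => z + z ^ (2 ^ n)
  have trF : ∀ z, (tr z) ^ (2 ^ n) = tr z := by
    intro z
    simp only [tr]
    rw [add_pow_char_pow, ← pow_mul, hL, add_comm]
  have tradd : ∀ z w, tr (z + w) = tr z + tr w := by
    intro z w
    simp only [tr]
    rw [add_pow_char_pow]; ring
  let S : Fin (2 ^ n - 1) → (ZMod (2 ^ n + 1) → ℤ) := fun i j => psi n (tr (r ^ i.val * u ^ j.val))
  have key : ∀ i i' : Fin (2 ^ n - 1), ∀ t : ZMod (2 ^ n + 1), (i ≠ i' ∨ t ≠ 0) →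
      (∑ j : ZMod (2 ^ n + 1), S i j * S i' (j + t)) ^ 2 ≤ 4 * 2 ^ n ∧
      Odd (∑ j : ZMod (2 ^ n + 1), S i j * S i' (j + t)) := by
    intro i i' t hne
    set c := r ^ i.val + r ^ i'.val * u ^ t.val with hc
    have hc0 : c ≠ 0 := by
      intro h0
      have e1 : r ^ i.val = r ^ i'.val * u ^ t.val := by
        rw [hc] at h0; linear_combination h0 - r ^ i'.val * u ^ t.val * h2
      have e2 := congrArg (fun z => z ^ (2 ^ n + 1)) e1
      simp only [mul_pow] at e2
      rw [pow_right_comm u, hu1, one_pow, mul_one, pow_succ, pow_succ, hrF, hrF] at e2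
      have e3 : (r ^ i.val - r ^ i'.val) ^ 2 = 0 := by
        linear_combination e2 + (r ^ i'.val * r ^ i'.val - r ^ i.val * r ^ i'.val) * h2
      have e4 := sub_eq_zero.1 (pow_eq_zero_iff two_ne_zero |>.1 e3)
      have e5 : i = i' := Fin.ext (hr.pow_inj i.2 i'.2 e4)
      subst e5
      rcases hne with h | h
      · exact h rfl
      · apply h
        apply huinj
        rw [ZMod.val_zero, pow_zero]
        have : r ^ i.val ≠ 0 := pow_ne_zero _ hr0
        apply mul_left_cancel₀ this
        rw [← e1, mul_one]
    have e : ∑ j : ZMod (2 ^ n + 1), S i j * S i' (j + t) = ∑ x ∈ U, psi n (c * x + (c * x) ^ (2 ^ n)) := by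
      rw [← himg, Finset.sum_image (fun j _ k _ h => huinj j k h)]
      apply Finset.sum_congr rfl
      intro j _
      simp only [S]
      rw [← psi_add n _ _ (trF _) (trF _), ← tradd, huadd]
      have : r ^ i.val * u ^ j.val + r ^ i'.val * (u ^ j.val * u ^ t.val) = c * u ^ j.val := by
        rw [hc]; ring
      rw [this]
    rw [e]
    exact U_bound n hn F hF hcard U hU hUcard hL c hc0
  have pm : ∀ i j, S i j = 1 ∨ S i j = -1 := fun i j => psi_pm n _
  refine ⟨S, ?_, pm, ?_, ?_⟩
  · intro i i' h
    by_contra hne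
    have h1 := (key i i' 0 (Or.inl hne)).1
    have : ∑ j : ZMod (2 ^ n + 1), S i j * S i' (j + 0) = 2 ^ n + 1 := by
      rw [← h]
      rw [Finset.sum_congr rfl (g := fun _ => (1 : ℤ))]
      · simp [ZMod.card]
      · intro j _
        rw [add_zero]
        rcases pm i j with h | h <;> rw [h] <;> norm_num
    rw [this] at h1
    have hq' : (2 : ℤ) ≤ 2 ^ n := by exact_mod_cast hq
    nlinarith
  · intro i t ht
    obtain ⟨k1, k2⟩ := key i i t (Or.inr ht)
    exact final_bound (2 ^ n) _ (by exact_mod_cast k1) k2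
  · intro i i' hne t
    obtain ⟨k1, k2⟩ := key i i' t (Or.inl hne)
    exact final_bound (2 ^ n) _ (by exact_mod_cast k1) k2
end
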